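/- For every n ≥ 3 and every automorphism φ of Houghton's group H_n, the growth rate GR(φ) equals 1. -/

import Mathlib

/-! ## Houghton's groups: basic setup -/

/-- The underlying set of Houghton's group: `n` rays of discrete points;
`(i, p)` is the point at position `p` on the ray `R_i`. -/
abbrev XH (n : ℕ) : Type := Fin n × ℕ

/-- `g` acts, outside a finite set, as the translation by `m i` on the ray `R_i`. -/
def HasTranslationVector {n : ℕ} (g : Equiv.Perm (XH n)) (m : Fin n → ℤ) : Prop :=
  ∃ K : Finset (XH n), ∀ x : XH n, x ∉ K →
    (g x).1 = x.1 ∧ ((g x).2 : ℤ) = (x.2 : ℤ) + m x.1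

/-- An eventual translation of `X_n`. -/
def IsEventualTranslation {n : ℕ} (g : Equiv.Perm (XH n)) : Prop :=
  ∃ m : Fin n → ℤ, HasTranslationVector g m

/-- Houghton's group `H_n`: the group of all eventual translations of `X_n`. -/
def Houghton (n : ℕ) : Subgroup (Equiv.Perm (XH n)) where
  carrier := {g | IsEventualTranslation g}
  one_mem' := ⟨0, ∅, fun x _ => by simp⟩
  mul_mem' := by
    rintro a b ⟨ma, Ka, hKa⟩ ⟨mb, Kb, hKb⟩
    classical
    refine ⟨ma + mb, Kb ∪ Kb.image b ∪ Ka.image b.symm, fun x hx => ?_⟩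
    simp only [Finset.mem_union, not_or] at hx
    have hxb : x ∉ Kb := hx.1.1
    have hbx : b x ∉ Ka := by
      intro hc
      exact hx.2 (Finset.mem_image.mpr ⟨b x, hc, b.symm_apply_apply x⟩)
    obtain ⟨hb1, hb2⟩ := hKb x hxb
    obtain ⟨ha1, ha2⟩ := hKa (b x) hbx
    refine ⟨?_, ?_⟩
    · show (a (b x)).1 = x.1
      rw [ha1, hb1]
    · show ((a (b x)).2 : ℤ) = (x.2 : ℤ) + (ma + mb) x.1
      rw [ha2, hb1, hb2, Pi.add_apply]
      ring
  inv_mem' := by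
    rintro a ⟨m, K, hK⟩
    classical
    refine ⟨-m, K.image a, fun x hx => ?_⟩
    have hy : a⁻¹ x ∉ K := by
      intro hc
      exact hx (Finset.mem_image.mpr ⟨a⁻¹ x, hc, a.apply_symm_apply x⟩)
    obtain ⟨e1, e2⟩ := hK _ hy
    rw [show a (a⁻¹ x) = x from a.apply_symm_apply x] at e1 e2
    refine ⟨e1.symm, ?_⟩
    rw [← e1] at e2
    rw [Pi.neg_apply]
    omega

/-- The subgroup of finitely supported permutations of `X_n`. -/
def FSymSub (n : ℕ) : Subgroup (Equiv.Perm (XH n)) where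
  carrier := {g | {x | g x ≠ x}.Finite}
  one_mem' := by simp
  mul_mem' := by
    intro a b ha hb
    apply Set.Finite.subset (ha.union hb)
    intro x hx
    by_cases h : b x = x
    · left
      show a x ≠ x
      simpa [Equiv.Perm.mul_apply, h] using hx
    · right; exact h
  inv_mem' := by
    intro a ha
    apply Set.Finite.subset ha
    intro x hx
    show a x ≠ x
    intro hc
    apply hx
    show a⁻¹ x = x
    conv_lhs => rw [← hc]
    exact a.symm_apply_apply x

/-- The subgroup of finitely supported even permutations of `X_n`:
products of an even number of transpositions. -/
def FAltSub (n : ℕ) : Subgroup (Equiv.Perm (XH n)) where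
  carrier := {g | ∃ l : List (Equiv.Perm (XH n)),
    (∀ τ ∈ l, τ.IsSwap) ∧ Even l.length ∧ l.prod = g}
  one_mem' := ⟨[], by simp, by simp, by simp⟩
  mul_mem' := by
    rintro a b ⟨la, hla, hea, rfl⟩ ⟨lb, hlb, heb, rfl⟩
    refine ⟨la ++ lb, ?_, ?_, List.prod_append⟩
    · intro τ hτ
      rcases List.mem_append.mp hτ with h | h
      exacts [hla τ h, hlb τ h]
    · simpa using hea.add heb
  inv_mem' := by
    rintro a ⟨l, hl, he, rfl⟩
    refine ⟨(l.map fun x => x⁻¹).reverse, ?_, by simpa using he,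
      (List.prod_inv_reverse l).symm⟩
    intro τ hτ
    rw [List.mem_reverse, List.mem_map] at hτ
    obtain ⟨σ, hσ, rfl⟩ := hτ
    obtain ⟨x, y, hxy, rfl⟩ := hl σ hσ
    exact ⟨x, y, hxy, by rw [Equiv.swap_inv]⟩

/-- `FSym_n` and `FAlt_n` viewed as subgroups of `H_n`. -/
def FSymIn (n : ℕ) : Subgroup (Houghton n) := (FSymSub n).comap (Houghton n).subtype

def FAltIn (n : ℕ) : Subgroup (Houghton n) := (FAltSub n).comap (Houghton n).subtype

/-- The index of the first ray `R_1`. -/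
def ray0 (n : ℕ) (hn : 0 < n) : Fin n := ⟨0, hn⟩

/-- The underlying function of the generator `g_i`. -/
def gFun (n : ℕ) (hn : 0 < n) (i : Fin n) : XH n → XH n := fun x =>
  if x.1 = ray0 n hn then (if x.2 = 0 then (i, 0) else (ray0 n hn, x.2 - 1))
  else if x.1 = i then (i, x.2 + 1) else x

/-- The inverse of `gFun`. -/
def gInvFun (n : ℕ) (hn : 0 < n) (i : Fin n) : XH n → XH n := fun x =>
  if x.1 = i then (if x.2 = 0 then (ray0 n hn, 0) else (i, x.2 - 1))
  else if x.1 = ray0 n hn then (ray0 n hn, x.2 + 1) else x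

/-- The generator `g_i` of `H_n` (as a permutation): it translates the first ray
down by one, sends `(1,1)` to `(i,1)` and translates the ray `R_i` up by one. -/
def gGen (n : ℕ) (hn : 0 < n) (i : Fin n) (hi : i ≠ ray0 n hn) : Equiv.Perm (XH n) where
  toFun := gFun n hn i
  invFun := gInvFun n hn i
  left_inv := by
    rintro ⟨j, p⟩
    show gInvFun n hn i (gFun n hn i (j, p)) = (j, p)
    simp only [gFun, gInvFun]
    split_ifs <;> simp_all [Prod.ext_iff] <;> omega
  right_inv := by
    rintro ⟨j, p⟩
    show gFun n hn i (gInvFun n hn i (j, p)) = (j, p)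
    simp only [gFun, gInvFun]
    split_ifs <;> simp_all [Prod.ext_iff] <;> omega

/-- The translation vector of `g_i`. -/
def gVec (n : ℕ) (hn : 0 < n) (i : Fin n) : Fin n → ℤ :=
  fun j => if j = ray0 n hn then -1 else if j = i then 1 else 0

theorem gGen_mem (n : ℕ) (hn : 0 < n) (i : Fin n) (hi : i ≠ ray0 n hn) :
    gGen n hn i hi ∈ Houghton n := by
  refine ⟨gVec n hn i, {(ray0 n hn, 0)}, ?_⟩
  rintro ⟨j, p⟩ hx
  rw [Finset.mem_singleton] at hx
  have hx' : j ≠ ray0 n hn ∨ p ≠ 0 := by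
    by_contra h
    push_neg at h
    exact hx (by rw [h.1, h.2])
  show (gFun n hn i (j, p)).1 = j ∧ ((gFun n hn i (j, p)).2 : ℤ) = (p : ℤ) + gVec n hn i j
  simp only [gFun, gVec]
  split_ifs <;> simp_all [Prod.ext_iff] <;> omega

/-- The generator `g_i` as an element of `H_n`. -/
def hGen (n : ℕ) (hn : 0 < n) (i : Fin n) (hi : i ≠ ray0 n hn) : Houghton n :=
  ⟨gGen n hn i hi, gGen_mem n hn i hi⟩

/-- The transposition `α` exchanging `(1,1)` and `(1,2)`. -/
def alphaPerm (n : ℕ) (hn : 0 < n) : Equiv.Perm (XH n) :=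
  Equiv.swap (ray0 n hn, 0) (ray0 n hn, 1)

theorem alphaPerm_mem (n : ℕ) (hn : 0 < n) : alphaPerm n hn ∈ Houghton n := by
  refine ⟨0, {(ray0 n hn, 0), (ray0 n hn, 1)}, ?_⟩
  intro x hx
  simp only [Finset.mem_insert, Finset.mem_singleton, not_or] at hx
  rw [show alphaPerm n hn x = x from Equiv.swap_apply_of_ne_of_ne hx.1 hx.2]
  simp

/-- `α` as an element of `H_n`. -/
def hAlpha (n : ℕ) (hn : 0 < n) : Houghton n := ⟨alphaPerm n hn, alphaPerm_mem n hn⟩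

theorem alphaPerm_mem_FSym (n : ℕ) (hn : 0 < n) : alphaPerm n hn ∈ FSymSub n := by
  show {x | alphaPerm n hn x ≠ x}.Finite
  apply Set.Finite.subset ((Set.finite_singleton (ray0 n hn, 1)).insert (ray0 n hn, 0))
  intro x hx
  by_contra hc
  simp only [Set.mem_insert_iff, Set.mem_singleton_iff, not_or] at hc
  exact hx (Equiv.swap_apply_of_ne_of_ne hc.1 hc.2)

theorem swap_mem_houghton {n : ℕ} (P Q : XH n) : Equiv.swap P Q ∈ Houghton n := by
  classical
  refine ⟨0, {P, Q}, ?_⟩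
  intro x hx
  simp only [Finset.mem_insert, Finset.mem_singleton, not_or] at hx
  rw [Equiv.swap_apply_of_ne_of_ne hx.1 hx.2]
  simp

/-- The transposition exchanging two points, as an element of `H_n`. -/
def hSwap {n : ℕ} (P Q : XH n) : Houghton n := ⟨Equiv.swap P Q, swap_mem_houghton P Q⟩

/-- The set of generators `{g_2, …, g_n}` of `H_n`. -/
def houghtonGensOnly (n : ℕ) (hn : 0 < n) : Set (Houghton n) :=
  {x | ∃ (i : Fin n) (hi : i ≠ ray0 n hn), x = hGen n hn i hi}

/-- The chosen generating set of `H_n`: `{g_2, …, g_n}` for `n ≠ 2`,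
and `{g_2, α}` for `n = 2`. -/
def houghtonGenSet (n : ℕ) (hn : 0 < n) : Set (Houghton n) :=
  if n = 2 then houghtonGensOnly n hn ∪ {hAlpha n hn} else houghtonGensOnly n hn

/-- Word length with respect to a set of generators (and their inverses). -/
noncomputable def wordLength {G : Type*} [Group G] (S : Set G) (g : G) : ℕ :=
  sInf {k | ∃ l : List G, (∀ x ∈ l, x ∈ S ∨ x⁻¹ ∈ S) ∧ l.length = k ∧ l.prod = g}

/-- The growth rate of an endomorphism `φ`:
`GR(φ) = sup_g limsup_k |φ^k(g)|^{1/k}`. -/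
noncomputable def growthRate {G : Type*} [Group G] (S : Set G) (φ : G →* G) : ℝ :=
  ⨆ g : G, Filter.limsup
    (fun k : ℕ => (wordLength S ((⇑φ)^[k] g) : ℝ) ^ (1 / (k : ℝ))) Filter.atTop

/-- The orbit of `x` under the permutation `h`. -/
def permOrbit {α : Type*} (h : Equiv.Perm α) (x : α) : Set α :=
  Set.range (fun k : ℤ => (h ^ k) x)

/-- `x` has infinite orbit under `h` (`x` is an essential point of `h`). -/
def InfiniteOrbit {α : Type*} (h : Equiv.Perm α) (x : α) : Prop :=
  (permOrbit h x).Infinite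

/-- The image `φ(g_i)` as a permutation of `X_n`. -/
def imageGen {n : ℕ} (h0 : 0 < n) (φ : Houghton n →* Houghton n)
    (i : Fin n) (hi : i ≠ ray0 n h0) : Equiv.Perm (XH n) :=
  ↑(φ (hGen n h0 i hi))

/-- The image `φ(α)` as a permutation of `X_n`. -/
def imageAlpha {n : ℕ} (h0 : 0 < n) (φ : Houghton n →* Houghton n) : Equiv.Perm (XH n) :=
  ↑(φ (hAlpha n h0))

/-- A transposition-orbit of an involution: a pair `{x, h x}` with `h x ≠ x`. -/
def TOrbit {Ω : Type*} (h : Equiv.Perm Ω) (T : Set Ω) : Prop :=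
  ∃ x, h x ≠ x ∧ T = {x, h x}

/-- The zero-sum vectors in `ℤ^n`. -/
def zeroSum (n : ℕ) : AddSubgroup (Fin n → ℤ) where
  carrier := {m | ∑ j, m j = 0}
  zero_mem' := by simp
  add_mem' := by
    intro a b ha hb
    simp only [Set.mem_setOf_eq] at *
    simp [Finset.sum_add_distrib, ha, hb]
  neg_mem' := by
    intro a ha
    simp only [Set.mem_setOf_eq] at *
    simp [ha]

/-! An automorphism of a permutation group containing all transpositions is induced by a
permutation of the underlying infinite set: a nontrivial involution `t` is a transposition iff
`(t * g t g⁻¹) ^ 6 = 1` for all `g` in the group, so transpositions go to transpositions, and the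
images of those moving a given point share exactly one point. For `H_n` this permutation `σ`
normalizes `H_n`, and conjugating a translation along a ray shows that `σ` is eventually affine on
each ray; as `σ⁻¹` is too, all slopes are `1` and `σ` permutes the ends of the rays. A power of `σ`
fixes these ends, hence lies in `H_n`: some power of the automorphism is inner, so word lengths
grow at most linearly along orbits.

That the `g_i` generate `H_n` for `n ≥ 3` is seen from a commutator of two of them, which is a
transposition and yields all finitely supported permutations, and from the fact that an element
translating no ray inwards translates no ray at all, which determines the translation on `R_1` from
those on the other rays.
-/

open Filter Topology

section WordLength

variable {G : Type*} [Group G] {S : Set G}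

theorem wordLength_prod_le {l : List G} (hl : ∀ x ∈ l, x ∈ S ∨ x⁻¹ ∈ S) :
    wordLength S l.prod ≤ l.length :=
  Nat.sInf_le ⟨l, hl, rfl, rfl⟩

theorem wordLength_one : wordLength S (1 : G) = 0 :=
  Nat.le_zero.mp (wordLength_prod_le (l := []) (by simp))

theorem exists_list_length_eq_wordLength (hS : Subgroup.closure S = ⊤) (g : G) :
    ∃ l : List G, (∀ x ∈ l, x ∈ S ∨ x⁻¹ ∈ S) ∧ l.length = wordLength S g ∧ l.prod = g := by
  have hg : g ∈ (Subgroup.closure S).toSubmonoid := hS ▸ Subgroup.mem_top g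
  rw [Subgroup.closure_toSubmonoid] at hg
  obtain ⟨l, hl, hlg⟩ := Submonoid.exists_list_of_mem_closure hg
  exact Nat.sInf_mem
    (s := {k | ∃ l : List G, (∀ x ∈ l, x ∈ S ∨ x⁻¹ ∈ S) ∧ l.length = k ∧ l.prod = g})
    ⟨l.length, l, hl, rfl, hlg⟩

theorem wordLength_eq_zero_iff (hS : Subgroup.closure S = ⊤) {g : G} :
    wordLength S g = 0 ↔ g = 1 := by
  refine ⟨fun hg => ?_, fun hg => hg ▸ wordLength_one⟩
  obtain ⟨l, -, hlen, rfl⟩ := exists_list_length_eq_wordLength hS g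
  rw [List.length_eq_zero_iff.mp (hlen.trans hg), List.prod_nil]

theorem wordLength_mul_le (hS : Subgroup.closure S = ⊤) (a b : G) :
    wordLength S (a * b) ≤ wordLength S a + wordLength S b := by
  obtain ⟨la, hla, hlena, hproda⟩ := exists_list_length_eq_wordLength hS a
  obtain ⟨lb, hlb, hlenb, hprodb⟩ := exists_list_length_eq_wordLength hS b
  rw [← hlena, ← hlenb, ← List.length_append]
  conv_lhs => rw [← hproda, ← hprodb, ← List.prod_append]
  exact wordLength_prod_le (List.forall_mem_append.mpr ⟨hla, hlb⟩)

theorem wordLength_inv_le (hS : Subgroup.closure S = ⊤) (g : G) :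
    wordLength S g⁻¹ ≤ wordLength S g := by
  obtain ⟨l, hl, hlen, hprod⟩ := exists_list_length_eq_wordLength hS g
  rw [← hlen, ← l.length_map (·⁻¹), ← List.length_reverse]
  conv_lhs => rw [← hprod, List.prod_inv_reverse]
  refine wordLength_prod_le fun x hx => ?_
  obtain ⟨y, hy, rfl⟩ := List.mem_map.mp (List.mem_reverse.mp hx)
  simpa only [inv_inv] using (hl y hy).symm

theorem wordLength_pow_le (hS : Subgroup.closure S = ⊤) (g : G) (k : ℕ) :
    wordLength S (g ^ k) ≤ k * wordLength S g := by
  induction k with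
  | zero => simp [wordLength_one]
  | succ k ih =>
    calc wordLength S (g ^ (k + 1)) ≤ wordLength S (g ^ k) + wordLength S g :=
          pow_succ g k ▸ wordLength_mul_le hS (g ^ k) g
      _ ≤ (k + 1) * wordLength S g := by linarith

theorem wordLength_conj_le (hS : Subgroup.closure S = ⊤) (a g : G) :
    wordLength S (a * g * a⁻¹) ≤ 2 * wordLength S a + wordLength S g := by
  linarith [wordLength_mul_le hS (a * g) a⁻¹, wordLength_mul_le hS a g, wordLength_inv_le hS a]

end WordLength

section GrowthRate

theorem tendsto_rpow_one_div_of_le_mul {u : ℕ → ℝ} {D : ℝ} (hone : ∀ᶠ k in atTop, 1 ≤ u k)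
    (hlin : ∀ᶠ k : ℕ in atTop, u k ≤ D * k) :
    Tendsto (fun k : ℕ => u k ^ (1 / (k : ℝ))) atTop (𝓝 1) := by
  have hD : 0 < D := by
    obtain ⟨k, h1, h2⟩ := (hone.and hlin).exists
    exact pos_of_mul_pos_left (zero_lt_one.trans_le (h1.trans h2)) k.cast_nonneg
  have hconst : Tendsto (fun k : ℕ => D ^ (1 / (k : ℝ))) atTop (𝓝 1) := by
    simpa using tendsto_const_nhds.rpow tendsto_one_div_atTop_nhds_zero_nat (Or.inl hD.ne')
  have hroot : Tendsto (fun k : ℕ => (k : ℝ) ^ (1 / (k : ℝ))) atTop (𝓝 1) :=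
    tendsto_rpow_div.comp tendsto_natCast_atTop_atTop
  refine tendsto_of_tendsto_of_tendsto_of_le_of_le' tendsto_const_nhds
    (one_mul (1 : ℝ) ▸ hconst.mul hroot) ?_ ?_
  · filter_upwards [hone] with k hk using Real.one_le_rpow hk (by positivity)
  · filter_upwards [hone, hlin] with k hk hk'
    rw [← Real.mul_rpow hD.le k.cast_nonneg]
    gcongr

variable {G : Type*} [Group G] {S : Set G} {φ : G →* G} {N : ℕ} {h : G}

theorem iterate_conj (h : G) (q : ℕ) : (⇑(MulAut.conj h))^[q] = MulAut.conj (h ^ q) := by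
  rw [map_pow]
  exact hom_coe_pow _ rfl (fun _ _ => rfl) _ _ |>.symm

theorem exists_wordLength_iterate_le (hS : Subgroup.closure S = ⊤) (hN : N ≠ 0)
    (hφ : (⇑φ)^[N] = MulAut.conj h) (g : G) :
    ∃ D, ∀ k ≠ 0, wordLength S ((⇑φ)^[k] g) ≤ D * k := by
  refine ⟨2 * wordLength S h + ∑ r ∈ Finset.range N, wordLength S ((⇑φ)^[r] g), fun k hk => ?_⟩
  have hdivmod : (⇑φ)^[k] g = h ^ (k / N) * (⇑φ)^[k % N] g * (h ^ (k / N))⁻¹ := by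
    conv_lhs => rw [← Nat.div_add_mod k N]
    rw [Function.iterate_add_apply, Function.iterate_mul, hφ, iterate_conj, MulAut.conj_apply]
  have hpow : wordLength S (h ^ (k / N)) ≤ k * wordLength S h :=
    (wordLength_pow_le hS h _).trans (Nat.mul_le_mul_right _ (Nat.div_le_self k N))
  have hrem : wordLength S ((⇑φ)^[k % N] g) ≤
      ∑ r ∈ Finset.range N, wordLength S ((⇑φ)^[r] g) :=
    Finset.single_le_sum (f := fun r => wordLength S ((⇑φ)^[r] g)) (fun _ _ => Nat.zero_le _)
      (Finset.mem_range.mpr (Nat.mod_lt k (Nat.pos_of_ne_zero hN)))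
  calc wordLength S ((⇑φ)^[k] g)
      ≤ 2 * wordLength S (h ^ (k / N)) + wordLength S ((⇑φ)^[k % N] g) :=
        hdivmod ▸ wordLength_conj_le hS _ _
    _ ≤ 2 * (k * wordLength S h) + (∑ r ∈ Finset.range N, wordLength S ((⇑φ)^[r] g)) * k := by
        gcongr
        exact hrem.trans (Nat.le_mul_of_pos_right _ (Nat.pos_of_ne_zero hk))
    _ = _ := by ring

/-- The exponential growth rate of the word length along the `φ`-orbit of `g`; the growth rate of
`φ` is the supremum of these over `g`. -/
noncomputable def growthRateAt (S : Set G) (φ : G →* G) (g : G) : ℝ :=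
  limsup (fun k : ℕ => (wordLength S ((⇑φ)^[k] g) : ℝ) ^ (1 / (k : ℝ))) atTop

theorem growthRateAt_one : growthRateAt S φ 1 = 0 := by
  refine (tendsto_const_nhds.congr' ?_).limsup_eq
  filter_upwards [eventually_ne_atTop 0] with k hk
  rw [iterate_map_one, wordLength_one, Nat.cast_zero, Real.zero_rpow (by positivity)]

theorem growthRateAt_eq_one_of_iterate_eq_conj (hS : Subgroup.closure S = ⊤) (hN : N ≠ 0)
    (hφ : (⇑φ)^[N] = MulAut.conj h) {g : G} (hg : g ≠ 1) : growthRateAt S φ g = 1 := by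
  obtain ⟨D, hD⟩ := exists_wordLength_iterate_le hS hN hφ g
  have hinj : Function.Injective φ := by
    refine Function.Injective.of_comp (f := (⇑φ)^[N - 1]) ?_
    rw [← Function.iterate_succ, Nat.succ_eq_add_one, Nat.sub_one_add_one hN, hφ]
    exact (MulAut.conj h).injective
  have hne (k : ℕ) : (⇑φ)^[k] g ≠ 1 := fun hk =>
    hg ((hinj.iterate k) (hk.trans (iterate_map_one φ k).symm))
  refine (tendsto_rpow_one_div_of_le_mul (D := D) (Eventually.of_forall fun k => ?_) ?_).limsup_eq
  · exact_mod_cast Nat.one_le_iff_ne_zero.mpr ((wordLength_eq_zero_iff hS).not.mpr (hne k))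
  · filter_upwards [eventually_ne_atTop 0] with k hk
    exact_mod_cast hD k hk

theorem growthRate_eq_one_of_iterate_eq_conj [Nontrivial G] (hS : Subgroup.closure S = ⊤)
    (hN : N ≠ 0) (hφ : (⇑φ)^[N] = MulAut.conj h) : growthRate S φ = 1 := by
  have hone {g : G} (hg : g ≠ 1) : growthRateAt S φ g = 1 :=
    growthRateAt_eq_one_of_iterate_eq_conj hS hN hφ hg
  have hle (g : G) : growthRateAt S φ g ≤ 1 := by
    obtain rfl | hg := eq_or_ne g 1
    · exact growthRateAt_one.trans_le zero_le_one
    · exact (hone hg).le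
  obtain ⟨g, hg⟩ := exists_ne (1 : G)
  exact IsGreatest.csSup_eq ⟨⟨g, hone hg⟩, Set.forall_mem_range.mpr hle⟩

end GrowthRate

section Transpositions

open Equiv Equiv.Perm

variable {α β : Type*} [DecidableEq α] [DecidableEq β]

theorem swap_mul_swap_mul_swap_of_ne {a b c : α} (hca : c ≠ a) (hcb : c ≠ b) :
    swap a b * swap a c * swap a b = swap b c := by
  rw [swap_comm a c, swap_mul_swap_mul_swap hca hcb]

theorem commute_coe_map_iff {K L : Type*} [Group K] [Group L] {A : Subgroup K} {B : Subgroup L}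
    (φ : A ≃* B) {g h : A} : Commute (φ g : L) (φ h : L) ↔ Commute (g : K) (h : K) := by
  simp only [Commute, SemiconjBy, ← Subgroup.coe_mul, Subtype.coe_inj, ← map_mul,
    φ.injective.eq_iff]

theorem eq_swap_apply_of_isSwap {τ : Perm α} (hτ : τ.IsSwap) {a : α} (ha : τ a ≠ a) :
    τ = swap a (τ a) := by
  obtain ⟨x, y, -, rfl⟩ := hτ
  obtain ⟨-, rfl | rfl⟩ := swap_apply_ne_self_iff.mp ha
  · rw [swap_apply_left]
  · rw [swap_apply_right, swap_comm]

theorem commute_swap_of_apply_eq_self {τ : Perm α} {a b : α} (ha : τ a = a) (hb : τ b = b) :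
    Commute (swap a b) τ := by
  have hconj := swap_apply_apply τ a b
  rw [ha, hb, eq_mul_inv_iff_mul_eq] at hconj
  exact hconj

theorem not_commute_swap_swap {a b c : α} (hab : a ≠ b) (hac : a ≠ c) (hbc : b ≠ c) :
    ¬ Commute (swap a b) (swap a c) := fun h => by
  have hc := Equiv.congr_fun h.eq c
  simp only [Perm.mul_apply, swap_apply_right, swap_apply_left,
    swap_apply_of_ne_of_ne hac.symm hbc.symm] at hc
  exact hab hc.symm

theorem exists_eq_swap_of_not_commute {τ ρ : Perm α} (hτ : τ.IsSwap) (hρ : ρ.IsSwap)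
    (h : ¬ Commute τ ρ) :
    ∃ a b c, a ≠ b ∧ a ≠ c ∧ b ≠ c ∧ τ = swap a b ∧ ρ = swap a c := by
  obtain ⟨a, b, hab, rfl⟩ := hτ
  have hne {c d : α} (hcd : swap a b = swap c d) (hd : ρ = swap c d) : False :=
    h (hcd ▸ hd ▸ Commute.refl _)
  by_cases ha : ρ a = a
  · have hb : ρ b ≠ b := fun hb => h (commute_swap_of_apply_eq_self ha hb)
    refine ⟨b, a, ρ b, hab.symm, hb.symm, fun hab' => ?_, swap_comm a b,
      eq_swap_apply_of_isSwap hρ hb⟩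
    exact hne (hab' ▸ swap_comm a b) (eq_swap_apply_of_isSwap hρ hb)
  · exact ⟨a, b, ρ a, hab, Ne.symm ha, fun hb => hne (hb ▸ rfl) (eq_swap_apply_of_isSwap hρ ha),
      rfl, eq_swap_apply_of_isSwap hρ ha⟩

theorem eq_swap_of_not_commute_of_not_commute {ρ : Perm α} (hρ : ρ.IsSwap) {a b c : α}
    (hbc : b ≠ c) (ha : ρ a = a) (hab : ¬ Commute (swap a b) ρ) (hac : ¬ Commute (swap a c) ρ) :
    ρ = swap b c := by
  have hb : ρ b ≠ b := fun hb => hab (commute_swap_of_apply_eq_self ha hb)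
  have hc : ρ c ≠ c := fun hc => hac (commute_swap_of_apply_eq_self ha hc)
  have hswap := eq_swap_apply_of_isSwap hρ hb
  rw [hswap] at hc
  obtain hcb | hcρ := (swap_apply_ne_self_iff.mp hc).2
  · exact absurd hcb.symm hbc
  · rwa [← hcρ] at hswap

theorem mul_pow_six_eq_one_of_isSwap {τ ρ : Perm α} (hτ : τ.IsSwap) (hρ : ρ.IsSwap) :
    (τ * ρ) ^ 6 = 1 := by
  by_cases h : Commute τ ρ
  · obtain ⟨a, b, -, rfl⟩ := hτ
    obtain ⟨c, d, -, rfl⟩ := hρ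
    rw [h.mul_pow, pow_mul _ 2 3, pow_mul _ 2 3, sq, sq, swap_mul_self, swap_mul_self, one_pow,
      one_mul]
  · obtain ⟨a, b, c, hab, hac, hbc, rfl, rfl⟩ := exists_eq_swap_of_not_commute hτ hρ h
    calc (swap a b * swap a c) ^ 6
        = ((swap a b * swap a c * swap a b) * (swap a c * swap a b * swap a c)) ^ 2 := by
          simp only [pow_succ, pow_zero, one_mul, mul_assoc]
      _ = (swap b c * swap b c) ^ 2 := by
        rw [swap_mul_swap_mul_swap_of_ne hac.symm hbc.symm,
          swap_mul_swap_mul_swap_of_ne hab.symm hbc, swap_comm c b]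
      _ = 1 := by rw [swap_mul_self, one_pow]

theorem exists_apply_ne_self_of_not_isSwap {t : Perm α} (hone : t ≠ 1) (hsq : t * t = 1)
    (ht : ¬ t.IsSwap) : ∃ a b, t a ≠ a ∧ t b ≠ b ∧ b ≠ a ∧ b ≠ t a := by
  have hinv (x : α) : t (t x) = x := Equiv.congr_fun hsq x
  obtain ⟨a, ha⟩ : ∃ a, t a ≠ a := by
    by_contra! hall
    exact hone (Equiv.ext hall)
  obtain ⟨b, hb⟩ : ∃ b, t b ≠ swap a (t a) b := by
    by_contra! hall
    exact ht ⟨a, t a, ha.symm, Equiv.ext hall⟩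
  refine ⟨a, b, ha, ?_, ?_, ?_⟩ <;> grind

theorem mul_conj_threeCycle_pow_six_ne_one {t : Perm α} (hsq : t * t = 1) {a b c : α}
    (ha : t a ≠ a) (hb : t b ≠ b) (hba : b ≠ a) (hbta : b ≠ t a) (hc : t c = c) :
    (t * ((swap a b * swap b c) * t * (swap a b * swap b c)⁻¹)) ^ 6 ≠ 1 := by
  have hinv (x : α) : t (t x) = x := Equiv.congr_fun hsq x
  have hca : c ≠ a := by grind
  have hcb : c ≠ b := by grind
  set g := swap a b * swap b c with hg
  have g_of_ne {x : α} (hxa : x ≠ a) (hxb : x ≠ b) (hxc : x ≠ c) : g x = x := by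
    simp [swap_apply_of_ne_of_ne, *]
  have gta : g (t a) = t a := g_of_ne ha (by grind) (by grind)
  have gtb : g (t b) = t b := g_of_ne (by grind) hb (by grind)
  have ga : g a = b := by simp [hg, swap_apply_of_ne_of_ne hba.symm hca.symm]
  have gb : g b = c := by simp [hg, swap_apply_of_ne_of_ne hca hcb]
  have gc : g c = a := by simp [hg]
  set w := t * (g * t * g⁻¹)
  have w_apply (x : α) : w (g x) = t (g (t x)) :=
    congrArg (fun y => t (g (t y))) (g.symm_apply_apply x)
  -- `c ↦ b ↦ a ↦ t a ↦ t b ↦ c` is a cycle of `w`, and its length `5` does not divide `6`.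
  have wa : w a = t a := by rw [← gc, w_apply, hc]
  have wb : w b = a := by rw [← ga, w_apply, gta, hinv]
  have wc : w c = b := by rw [← gb, w_apply, gtb, hinv]
  have wta : w (t a) = t b := by rw [← gta, w_apply, hinv, ga]
  have wtb : w (t b) = c := by rw [← gtb, w_apply, hinv, gb, hc]
  intro h
  have hwc : w (w (w (w (w (w c))))) = c := Equiv.congr_fun h c
  rw [wc, wb, wa, wta, wtb, wc] at hwc
  exact hcb hwc.symm

theorem mul_conj_fourCycle_pow_six_ne_one {t : Perm α} (hsq : t * t = 1) (ht : ∀ x, t x ≠ x)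
    {a b c d : α} (hb : b ∉ ({a, t a} : Finset α)) (hc : c ∉ ({a, t a, b, t b} : Finset α))
    (hd : d ∉ ({a, t a, b, t b, c, t c} : Finset α)) :
    (t * ((swap a b * swap b c * swap c d) * t * (swap a b * swap b c * swap c d)⁻¹)) ^ 6
      ≠ 1 := by
  have hinv (x : α) : t (t x) = x := Equiv.congr_fun hsq x
  simp only [Finset.mem_insert, Finset.mem_singleton, not_or] at hb hc hd
  set g := swap a b * swap b c * swap c d with hg
  have g_of_ne {x : α} (hxa : x ≠ a) (hxb : x ≠ b) (hxc : x ≠ c) (hxd : x ≠ d) : g x = x := by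
    simp [swap_apply_of_ne_of_ne, *]
  have gta : g (t a) = t a := g_of_ne (ht a) (by grind) (by grind) (by grind)
  have gtb : g (t b) = t b := g_of_ne (by grind) (ht b) (by grind) (by grind)
  have gtc : g (t c) = t c := g_of_ne (by grind) (by grind) (ht c) (by grind)
  have gtd : g (t d) = t d := g_of_ne (by grind) (by grind) (by grind) (ht d)
  have ga : g a = b := by simp [swap_apply_of_ne_of_ne, Ne.symm, *]
  have gb : g b = c := by simp [swap_apply_of_ne_of_ne, Ne.symm, *]
  have gc : g c = d := by simp [swap_apply_of_ne_of_ne, *]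
  have gd : g d = a := by simp [hg]
  set w := t * (g * t * g⁻¹)
  have w_apply (x : α) : w (g x) = t (g (t x)) :=
    congrArg (fun y => t (g (t y))) (g.symm_apply_apply x)
  -- `c ↦ b ↦ a ↦ d ↦ c` is a cycle of `w`, and its length `4` does not divide `6`.
  have wa : w a = d := by rw [← gd, w_apply, gtd, hinv]
  have wb : w b = a := by rw [← ga, w_apply, gta, hinv]
  have wc : w c = b := by rw [← gb, w_apply, gtb, hinv]
  have wd : w d = c := by rw [← gc, w_apply, gtc, hinv]
  intro h
  have hwc : w (w (w (w (w (w c))))) = c := Equiv.congr_fun h c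
  rw [wc, wb, wa, wd, wc, wb] at hwc
  exact hc.1 hwc.symm

/-- A permutation group on `α` containing every transposition. These are the groups whose
isomorphisms are all induced by bijections of the underlying infinite sets. -/
def ContainsSwaps (G : Subgroup (Perm α)) : Prop :=
  ∀ x y, swap x y ∈ G

theorem isSwap_of_forall_mul_conj_pow_six [Infinite α] {G : Subgroup (Perm α)}
    (hG : ContainsSwaps G) {t : Perm α} (hone : t ≠ 1) (hsq : t * t = 1)
    (h : ∀ g ∈ G, (t * (g * t * g⁻¹)) ^ 6 = 1) : t.IsSwap := by
  by_contra ht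
  obtain ⟨a, b, ha, hb, hba, hbta⟩ := exists_apply_ne_self_of_not_isSwap hone hsq ht
  by_cases hfix : ∃ c, t c = c
  · obtain ⟨c, hc⟩ := hfix
    exact mul_conj_threeCycle_pow_six_ne_one hsq ha hb hba hbta hc
      (h _ (G.mul_mem (hG a b) (hG b c)))
  · push Not at hfix
    obtain ⟨c, hc⟩ := Infinite.exists_notMem_finset {a, t a, b, t b}
    obtain ⟨d, hd⟩ := Infinite.exists_notMem_finset {a, t a, b, t b, c, t c}
    exact mul_conj_fourCycle_pow_six_ne_one hsq hfix (by simp [hba, hbta]) hc hd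
      (h _ (G.mul_mem (G.mul_mem (hG a b) (hG b c)) (hG c d)))

variable {G : Subgroup (Perm α)} {H : Subgroup (Perm β)}

/-- The transposition of `x` and `y`, as an element of a group containing all transpositions. -/
def ContainsSwaps.transposition (hG : ContainsSwaps G) (x y : α) : G :=
  ⟨swap x y, hG x y⟩

namespace ContainsSwaps

theorem conj_transposition (hG : ContainsSwaps G) (g : G) (x y : α) :
    g * hG.transposition x y * g⁻¹ =
      hG.transposition ((g : Perm α) x) ((g : Perm α) y) :=
  Subtype.ext (swap_apply_apply (g : Perm α) x y).symm

theorem map_transposition_isSwap [Infinite β] (hG : ContainsSwaps G) (hH : ContainsSwaps H)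
    (φ : G ≃* H) {x y : α} (hxy : x ≠ y) : (φ (hG.transposition x y) : Perm β).IsSwap := by
  refine isSwap_of_forall_mul_conj_pow_six hH ?_ ?_ fun h hh => ?_
  · rw [Ne, OneMemClass.coe_eq_one, map_eq_one_iff φ φ.injective, ← OneMemClass.coe_eq_one]
    exact swap_eq_one_iff.not.mpr hxy
  · rw [← Subgroup.coe_mul, ← map_mul, OneMemClass.coe_eq_one, map_eq_one_iff φ φ.injective]
    exact Subtype.ext (swap_mul_self x y)
  · obtain ⟨g, hg⟩ := φ.surjective ⟨h, hh⟩
    have hsix : (hG.transposition x y * (g * hG.transposition x y * g⁻¹)) ^ 6 = 1 := by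
      rw [hG.conj_transposition]
      exact Subtype.ext (mul_pow_six_eq_one_of_isSwap ⟨x, y, hxy, rfl⟩
        ⟨_, _, (g : Perm α).injective.ne hxy, rfl⟩)
    simpa [hg] using congrArg (fun k => (φ k : Perm β)) hsix

theorem nontrivial [Nontrivial α] (hG : ContainsSwaps G) : Nontrivial G := by
  obtain ⟨x, y, hxy⟩ := exists_pair_ne α
  exact ⟨hG.transposition x y, 1, fun h => hxy (swap_eq_one_iff.mp (congrArg Subtype.val h))⟩

theorem transposition_self (hG : ContainsSwaps G) (x : α) : hG.transposition x x = 1 :=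
  Subtype.ext (swap_self x)

theorem transposition_comm (hG : ContainsSwaps G) (x y : α) :
    hG.transposition x y = hG.transposition y x :=
  Subtype.ext (swap_comm x y)

theorem transposition_braid (hG : ContainsSwaps G) {x y z : α} (hzx : z ≠ x) (hzy : z ≠ y) :
    hG.transposition x y * hG.transposition x z * hG.transposition x y =
      hG.transposition y z :=
  Subtype.ext (swap_mul_swap_mul_swap_of_ne hzx hzy)

theorem exists_map_transposition_eq_swap [Infinite α] [Infinite β] (hG : ContainsSwaps G)
    (hH : ContainsSwaps H) (φ : G ≃* H) (o : α) :
    ∃ a, ∀ w, ∃ b, (φ (hG.transposition o w) : Perm β) = swap a b := by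
  obtain ⟨y, hy⟩ := Infinite.exists_notMem_finset {o}
  obtain ⟨z, hz⟩ := Infinite.exists_notMem_finset {o, y}
  simp only [Finset.mem_insert, Finset.mem_singleton, not_or] at hy hz
  have hswap {w : α} (hw : w ≠ o) := hG.map_transposition_isSwap hH φ hw.symm
  have hcomm {v w : α} (hv : v ≠ o) (hw : w ≠ o) (hvw : v ≠ w) :=
    (commute_coe_map_iff φ (g := hG.transposition o v) (h := hG.transposition o w)).not.mpr
      (not_commute_swap_swap hv.symm hw.symm hvw)
  obtain ⟨a, b, c, -, hac, hbc, hyab, hzac⟩ :=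
    exists_eq_swap_of_not_commute (hswap hy) (hswap hz.1) (hcomm hy hz.1 (Ne.symm hz.2))
  refine ⟨a, fun w => ?_⟩
  obtain rfl | hwo := eq_or_ne w o
  · exact ⟨a, by rw [hG.transposition_self, map_one, swap_self]; rfl⟩
  obtain rfl | hwy := eq_or_ne w y
  · exact ⟨b, hyab⟩
  obtain rfl | hwz := eq_or_ne w z
  · exact ⟨c, hzac⟩
  refine ⟨_, eq_swap_apply_of_isSwap (hswap hwo) fun ha => ?_⟩
  have hwbc : (φ (hG.transposition o w) : Perm β) = swap b c :=
    eq_swap_of_not_commute_of_not_commute (hswap hwo) hbc ha (hyab ▸ hcomm hy hwo hwy.symm)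
      (hzac ▸ hcomm hz.1 hwo hwz.symm)
  have hyz : (φ (hG.transposition y z) : Perm β) = swap b c := by
    rw [← hG.transposition_braid hz.1 hz.2, map_mul, map_mul, Subgroup.coe_mul, Subgroup.coe_mul,
      hyab, hzac, swap_mul_swap_mul_swap_of_ne hac.symm hbc.symm]
  have hoyz : swap o w = swap y z :=
    congrArg Subtype.val (φ.injective (Subtype.ext (hwbc.trans hyz.symm)))
  have how := Equiv.congr_fun hoyz w
  rw [swap_apply_right, swap_apply_of_ne_of_ne hwy hwz] at how
  exact hwo how.symm

theorem exists_equiv_map_transposition [Infinite α] [Infinite β] (hG : ContainsSwaps G)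
    (hH : ContainsSwaps H) (φ : G ≃* H) :
    ∃ σ : α ≃ β, ∀ x y, φ (hG.transposition x y) = hH.transposition (σ x) (σ y) := by
  obtain ⟨o⟩ := (inferInstance : Nonempty α)
  obtain ⟨a, hstar⟩ := hG.exists_map_transposition_eq_swap hH φ o
  choose σ hσ using hstar
  replace hσ (w : α) : φ (hG.transposition o w) = hH.transposition a (σ w) := Subtype.ext (hσ w)
  have hinj : Function.Injective σ := fun v w hvw => by
    have heq := φ.injective ((hσ v).trans (hvw ▸ (hσ w).symm))
    exact swap_injective_of_left o (congrArg Subtype.val heq)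
  have ho : σ o = a := by
    have hone := hσ o
    rw [hG.transposition_self, map_one] at hone
    exact (swap_eq_one_iff.mp (congrArg Subtype.val hone).symm).symm
  have hswap (x y : α) : φ (hG.transposition x y) = hH.transposition (σ x) (σ y) := by
    obtain rfl | hyo := eq_or_ne y o
    · rw [hG.transposition_comm, hσ, ho, hH.transposition_comm]
    obtain rfl | hyx := eq_or_ne y x
    · rw [hG.transposition_self, hH.transposition_self, map_one]
    rw [← hG.transposition_braid hyo hyx, map_mul, map_mul, hσ, hσ,
      hH.transposition_braid (ho ▸ hinj.ne hyo) (hinj.ne hyx)]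
  have hsurj : Function.Surjective σ := fun b => by
    obtain rfl | hba := eq_or_ne b a
    · exact ⟨o, ho⟩
    obtain ⟨x, y, -, hxy⟩ := hH.map_transposition_isSwap hG φ.symm hba.symm
    have heq : hH.transposition a b = hH.transposition (σ x) (σ y) := by
      rw [← hswap, ← MulEquiv.symm_apply_eq]
      exact Subtype.ext hxy
    have hb : swap (σ x) (σ y) b ≠ b := by
      rw [← show swap a b = swap (σ x) (σ y) from congrArg Subtype.val heq, swap_apply_right]
      exact hba.symm
    obtain hbx | hby := (swap_apply_ne_self_iff.mp hb).2
    · exact ⟨x, hbx.symm⟩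
    · exact ⟨y, hby.symm⟩
  exact ⟨Equiv.ofBijective σ ⟨hinj, hsurj⟩, hswap⟩

theorem eq_of_forall_swap_apply_eq {γ : Type*} [Infinite γ] {f g : γ ≃ β}
    (h : ∀ x y, swap (f x) (f y) = swap (g x) (g y)) : f = g := by
  classical
  ext x
  by_contra hx
  obtain ⟨y, hy⟩ := Infinite.exists_notMem_finset {x, g.symm (f x)}
  simp only [Finset.mem_insert, Finset.mem_singleton, not_or, Equiv.eq_symm_apply] at hy
  have hfix := Equiv.congr_fun (h x y) (f x)
  rw [swap_apply_left, swap_apply_of_ne_of_ne hx (Ne.symm hy.2)] at hfix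
  exact hy.1 (f.injective hfix)

/-- The transpositions determine a permutation, so the bijection tracking their images tracks the
images of all of `G`. -/
theorem exists_equiv_map_eq_permCongr [Infinite α] [Infinite β] (hG : ContainsSwaps G)
    (hH : ContainsSwaps H) (φ : G ≃* H) :
    ∃ σ : α ≃ β, ∀ g : G, (φ g : Perm β) = σ.permCongr g := by
  obtain ⟨σ, hσ⟩ := hG.exists_equiv_map_transposition hH φ
  have hconj (g : G) : (g : Perm α).trans σ = σ.trans (φ g : Perm β) := by
    refine eq_of_forall_swap_apply_eq fun x y => ?_
    have h := congrArg φ (hG.conj_transposition g x y)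
    rw [map_mul, map_mul, map_inv, hσ, hσ, hH.conj_transposition] at h
    exact (congrArg Subtype.val h).symm
  refine ⟨σ, fun g => Equiv.ext fun z => ?_⟩
  simpa using (Equiv.congr_fun (hconj g) (σ.symm z)).symm

end ContainsSwaps

end Transpositions

section Normalizer

variable {G : Type*} [Group G] {H : Subgroup G}

theorem mem_normalizer_of_forall_coe_map_eq_conj {φ : H ≃* H} {σ : G}
    (hσ : ∀ g : H, (φ g : G) = σ * g * σ⁻¹) : σ ∈ Subgroup.normalizer (H : Set G) := by
  refine Subgroup.mem_normalizer_iff.mpr fun g => ⟨fun hg => ?_, fun hg => ?_⟩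
  · exact hσ ⟨g, hg⟩ ▸ (φ ⟨g, hg⟩).2
  · obtain ⟨k, hk⟩ := φ.surjective ⟨_, hg⟩
    have hkg : σ * k * σ⁻¹ = σ * g * σ⁻¹ := (hσ k).symm.trans (congrArg Subtype.val hk)
    exact mul_left_cancel (mul_right_cancel hkg) ▸ k.2

theorem iterate_eq_conj_of_forall_coe_map_eq_conj {φ : H →* H} {σ : G}
    (hσ : ∀ g : H, (φ g : G) = σ * g * σ⁻¹) {N : ℕ} (hN : σ ^ N ∈ H) :
    (⇑φ)^[N] = MulAut.conj (⟨σ ^ N, hN⟩ : H) := by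
  have hsemi : Function.Semiconj ((↑) : H → G) φ (MulAut.conj σ) := hσ
  ext g
  rw [hsemi.iterate_right N g, iterate_conj]
  rfl

end Normalizer

section EventuallyAffine

open Equiv

theorem eventually_cofinite_prod_nat {ι : Type*} [Finite ι] {P : ι × ℕ → Prop} :
    (∀ᶠ x in cofinite, P x) ↔ ∀ j, ∀ᶠ p in atTop, P (j, p) := by
  rw [← coprod_cofinite, cofinite_eq_bot, Filter.coprod, comap_bot, bot_sup_eq, eventually_comap,
    Nat.cofinite_eq_atTop, ← eventually_all]
  refine eventually_congr (Eventually.of_forall fun p => ⟨fun h j => h (j, p) rfl, ?_⟩)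
  rintro h ⟨j, _⟩ rfl
  exact h j

theorem exists_eventually_eq_of_eventually_succ_eq {α : Type*} {u : ℕ → α}
    (h : ∀ᶠ p in atTop, u (p + 1) = u p) : ∃ a, ∀ᶠ p in atTop, u p = a := by
  obtain ⟨N, hN⟩ := eventually_atTop.mp h
  refine ⟨u N, eventually_atTop.mpr ⟨N, fun p hp => ?_⟩⟩
  exact Nat.le_induction rfl (fun q hq ih => (hN q hq).trans ih) p hp

variable {n : ℕ}

/-- Outside a finite set, `σ` maps the ray `j` into the ray `f j` by the affine map
`p ↦ c j * p + d j` of positions. -/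
def EventuallyAffine (σ : Perm (XH n)) (f : Fin n → Fin n) (c d : Fin n → ℤ) : Prop :=
  ∀ᶠ x in cofinite, (σ x).1 = f x.1 ∧ ((σ x).2 : ℤ) = c x.1 * x.2 + d x.1

theorem hasTranslationVector_iff {g : Perm (XH n)} {m : Fin n → ℤ} :
    HasTranslationVector g m ↔ EventuallyAffine g id 1 m := by
  simp only [HasTranslationVector, EventuallyAffine, id_eq, Pi.one_apply, one_mul]
  refine ⟨fun ⟨K, hK⟩ => ?_, fun h => ⟨(eventually_cofinite.mp h).toFinset, fun x hx => ?_⟩⟩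
  · filter_upwards [K.finite_toSet.compl_mem_cofinite] with x hx using hK x hx
  · simpa only [Set.Finite.mem_toFinset, Set.mem_ofPred_eq, not_not] using hx

namespace EventuallyAffine

variable {σ τ : Perm (XH n)} {f g : Fin n → Fin n} {c c' d d' : Fin n → ℤ}

theorem one : EventuallyAffine (1 : Perm (XH n)) id 1 0 :=
  Eventually.of_forall fun x => by simp

theorem mul (hσ : EventuallyAffine σ f c d) (hτ : EventuallyAffine τ g c' d') :
    EventuallyAffine (σ * τ) (f ∘ g) (c ∘ g * c') (c ∘ g * d' + d ∘ g) := by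
  filter_upwards [hτ, τ.injective.tendsto_cofinite.eventually hσ] with x hx hx'
  rw [hx.1, hx.2] at hx'
  refine ⟨hx'.1, hx'.2.trans ?_⟩
  simp only [Pi.add_apply, Pi.mul_apply, Function.comp_apply]
  ring

theorem eventually_ray (hσ : EventuallyAffine σ f c d) (j : Fin n) :
    ∀ᶠ p : ℕ in atTop, (σ (j, p)).1 = f j ∧ ((σ (j, p)).2 : ℤ) = c j * p + d j :=
  eventually_cofinite_prod_nat.mp hσ j

theorem unique (hσ : EventuallyAffine σ f c d) (hσ' : EventuallyAffine σ g c' d') :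
    f = g ∧ c = c' ∧ d = d' := by
  have hray (j : Fin n) : f j = g j ∧ c j = c' j ∧ d j = d' j := by
    have h := (hσ.eventually_ray j).and (hσ'.eventually_ray j)
    obtain ⟨p, ⟨⟨hf, hp⟩, hg, hp'⟩, ⟨-, hq⟩, -, hq'⟩ :=
      (h.and ((tendsto_add_atTop_nat 1).eventually h)).exists
    have hc : c j = c' j := by
      push_cast at hq hq'
      linarith
    rw [← hc] at hp'
    exact ⟨hf.symm.trans hg, hc, by linarith⟩
  exact ⟨funext fun j => (hray j).1, funext fun j => (hray j).2.1, funext fun j => (hray j).2.2⟩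

theorem slope_nonneg (hσ : EventuallyAffine σ f c d) : 0 ≤ c := by
  intro j
  obtain ⟨p, ⟨-, hp⟩, hlarge⟩ :=
    ((hσ.eventually_ray j).and (eventually_gt_atTop (d j).toNat)).exists
  by_contra! hneg
  have hd := Int.self_le_toNat (d j)
  have hcp : c j * p ≤ -1 * p := by
    gcongr
    simp only [Pi.zero_apply] at hneg
    omega
  omega

theorem pow (hσ : EventuallyAffine σ f 1 d) (k : ℕ) :
    ∃ d', EventuallyAffine (σ ^ k) f^[k] 1 d' := by
  induction k with
  | zero => exact ⟨0, one⟩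
  | succ k ih =>
    obtain ⟨d', hk⟩ := ih
    refine ⟨d + d' ∘ f, ?_⟩
    simpa only [pow_succ, Function.iterate_succ, Pi.one_comp, one_mul] using hk.mul hσ

end EventuallyAffine

theorem hasTranslationVector_gGen (h0 : 0 < n) (i : Fin n) (hi : i ≠ ray0 n h0) :
    HasTranslationVector (gGen n h0 i hi) (gVec n h0 i) := by
  refine ⟨{(ray0 n h0, 0)}, fun ⟨j, p⟩ hx => ?_⟩
  rw [Finset.mem_singleton, Prod.mk.injEq] at hx
  simp only [gGen, Equiv.coe_fn_mk, gFun, gVec]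
  split_ifs <;> grind

theorem HasTranslationVector.mul {g h : Perm (XH n)} {m k : Fin n → ℤ}
    (hg : HasTranslationVector g m) (hh : HasTranslationVector h k) :
    HasTranslationVector (g * h) (m + k) := by
  rw [hasTranslationVector_iff] at *
  simpa only [Pi.one_comp, one_mul, Function.comp_id, add_comm k] using hg.mul hh

theorem HasTranslationVector.unique {g : Perm (XH n)} {m k : Fin n → ℤ}
    (hm : HasTranslationVector g m) (hk : HasTranslationVector g k) : m = k := by
  rw [hasTranslationVector_iff] at hm hk
  exact (hm.unique hk).2.2

theorem HasTranslationVector.inv {g : Perm (XH n)} {m : Fin n → ℤ}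
    (hg : HasTranslationVector g m) : HasTranslationVector g⁻¹ (-m) := by
  obtain ⟨k, hk⟩ : IsEventualTranslation g⁻¹ := (Houghton n).inv_mem ⟨m, hg⟩
  have hone : HasTranslationVector (1 : Perm (XH n)) 0 := hasTranslationVector_iff.mpr .one
  rwa [neg_eq_of_add_eq_zero_right ((mul_inv_cancel g ▸ hg.mul hk).unique hone)]

theorem exists_mem_houghton_eventually_succ (hn : 2 ≤ n) (j : Fin n) :
    ∃ t ∈ Houghton n, ∀ᶠ p in atTop, t (j, p) = (j, p + 1) := by
  have h0 : 0 < n := by omega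
  obtain ⟨t, m, ht, hm⟩ : ∃ t m, HasTranslationVector (n := n) t m ∧ m j = 1 := by
    by_cases hj : j = ray0 n h0
    · have : Nontrivial (Fin n) := Fin.nontrivial_iff_two_le.mpr hn
      obtain ⟨i, hi⟩ := exists_ne (ray0 n h0)
      exact ⟨_, _, (hasTranslationVector_gGen h0 i hi).inv, by simp [gVec, hj]⟩
    · exact ⟨_, _, hasTranslationVector_gGen h0 j hj, by simp [gVec, hj]⟩
  refine ⟨t, ⟨m, ht⟩, ?_⟩
  filter_upwards [(hasTranslationVector_iff.mp ht).eventually_ray j] with p hp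
  rw [Pi.one_apply, one_mul, hm] at hp
  exact Prod.ext hp.1 (by exact_mod_cast hp.2)

theorem exists_eventually_affine_on_ray (hn : 2 ≤ n) {σ : Perm (XH n)}
    (hσ : σ ∈ Subgroup.normalizer (Houghton n : Set (Perm (XH n)))) (j : Fin n) :
    ∃ i, ∃ c d : ℤ, ∀ᶠ p : ℕ in atTop, (σ (j, p)).1 = i ∧ ((σ (j, p)).2 : ℤ) = c * p + d := by
  obtain ⟨t, ht, htj⟩ := exists_mem_houghton_eventually_succ hn j
  obtain ⟨m, hm⟩ := (Subgroup.mem_normalizer_iff.mp hσ t).mp ht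
  have hstep : ∀ᶠ p in atTop, (σ (j, p + 1)).1 = (σ (j, p)).1 ∧
      ((σ (j, p + 1)).2 : ℤ) = (σ (j, p)).2 + m (σ (j, p)).1 := by
    have hconj := σ.injective.tendsto_cofinite.eventually (hasTranslationVector_iff.mp hm)
    filter_upwards [eventually_cofinite_prod_nat.mp hconj j, htj] with p hp hpt
    simpa [hpt] using hp
  obtain ⟨i, hi⟩ := exists_eventually_eq_of_eventually_succ_eq (u := fun p => (σ (j, p)).1)
    (hstep.mono fun p hp => hp.1)
  obtain ⟨d, hd⟩ := exists_eventually_eq_of_eventually_succ_eq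
    (u := fun p => ((σ (j, p)).2 : ℤ) - m i * p) <| by
      filter_upwards [hstep, hi] with p hp hpi
      rw [hp.2, hpi]
      push_cast
      ring
  refine ⟨i, m i, d, ?_⟩
  filter_upwards [hi, hd] with p hpi hpd using ⟨hpi, by linarith⟩

theorem exists_eventuallyAffine_of_mem_normalizer (hn : 2 ≤ n) {σ : Perm (XH n)}
    (hσ : σ ∈ Subgroup.normalizer (Houghton n : Set (Perm (XH n)))) :
    ∃ f c d, EventuallyAffine σ f c d := by
  choose f c d h using exists_eventually_affine_on_ray hn hσ
  exact ⟨f, c, d, eventually_cofinite_prod_nat.mpr h⟩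

theorem exists_eventuallyAffine_one_of_mem_normalizer (hn : 2 ≤ n) {σ : Perm (XH n)}
    (hσ : σ ∈ Subgroup.normalizer (Houghton n : Set (Perm (XH n)))) :
    ∃ (π : Perm (Fin n)) (d : Fin n → ℤ), EventuallyAffine σ π 1 d := by
  obtain ⟨f, c, d, hf⟩ := exists_eventuallyAffine_of_mem_normalizer hn hσ
  obtain ⟨g, c', d', hg⟩ := exists_eventuallyAffine_of_mem_normalizer hn (inv_mem hσ)
  obtain ⟨hgf, hcc, -⟩ := (inv_mul_cancel σ ▸ hg.mul hf).unique .one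
  obtain ⟨hfg, -, -⟩ := (mul_inv_cancel σ ▸ hf.mul hg).unique .one
  have hc : c = 1 := funext fun j =>
    Int.eq_one_of_mul_eq_one_left (hf.slope_nonneg j) (congrFun hcc j)
  exact ⟨⟨f, g, congrFun hgf, congrFun hfg⟩, d, hc ▸ hf⟩

theorem exists_pow_mem_houghton_of_mem_normalizer (hn : 2 ≤ n) {σ : Perm (XH n)}
    (hσ : σ ∈ Subgroup.normalizer (Houghton n : Set (Perm (XH n)))) :
    ∃ N ≠ 0, σ ^ N ∈ Houghton n := by
  obtain ⟨π, d, hπ⟩ := exists_eventuallyAffine_one_of_mem_normalizer hn hσ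
  obtain ⟨m, hm⟩ := hπ.pow (orderOf π)
  rw [← Perm.coe_pow, pow_orderOf_eq_one] at hm
  exact ⟨orderOf π, (orderOf_pos π).ne', m, hasTranslationVector_iff.mpr hm⟩

end EventuallyAffine

section Generation

open Equiv Equiv.Perm

theorem swap_apply_apply_mem_iff {α : Type*} [DecidableEq α] {C : Subgroup (Perm α)} {g : Perm α}
    (hg : g ∈ C) {x y : α} : swap (g x) (g y) ∈ C ↔ swap x y ∈ C := by
  rw [swap_apply_apply, C.mul_mem_cancel_right (C.inv_mem hg), C.mul_mem_cancel_left hg]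

theorem ContainsSwaps.mem_of_finite {α : Type*} [DecidableEq α] {C : Subgroup (Perm α)}
    (hC : ContainsSwaps C) {g : Perm α} (hg : {x | g x ≠ x}.Finite) : g ∈ C := by
  have hle : Subgroup.closure {σ : Perm α | σ.IsSwap} ≤ C := by
    rw [Subgroup.closure_le]
    rintro _ ⟨x, y, -, rfl⟩
    exact hC x y
  exact hle (mem_closure_isSwap'.mpr hg)

variable {n : ℕ} {C : Subgroup (Perm (XH n))}

theorem HasTranslationVector.eq_zero_of_nonneg {g : Perm (XH n)} {m : Fin n → ℤ}
    (hg : HasTranslationVector g m) (hm : 0 ≤ m) : m = 0 := by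
  obtain ⟨K, hK⟩ := hg
  obtain ⟨R, hR⟩ := (K.image Prod.snd).exists_nat_subset_range
  have htrans {x : XH n} (hx : R ≤ x.2) : (g x).1 = x.1 ∧ ((g x).2 : ℤ) = x.2 + m x.1 :=
    hK x fun hxK => (Finset.mem_range.mp (hR (Finset.mem_image_of_mem _ hxK))).not_ge hx
  -- `g⁻¹` maps the finite set `F` into itself, hence so does `g`: no point leaves `F`.
  let F : Set (XH n) := {x | x.2 < R}
  have hfin : F.Finite :=
    ((Finset.univ ×ˢ Finset.range R).finite_toSet).subset fun x (hx : x.2 < R) => by simpa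
  have hFinv : Set.MapsTo g.symm F F := fun x (hx : x.2 < R) => by
    by_contra hlarge
    have hpos := (htrans (not_lt.mp hlarge)).2
    rw [g.apply_symm_apply] at hpos
    have hnonneg := hm (g.symm x).1
    simp only [F, Set.mem_ofPred_eq, Pi.zero_apply] at hlarge hnonneg
    omega
  have := hfin.to_subtype
  have hF : Set.MapsTo g F F := perm_symm_mapsTo_of_mapsTo g.symm hFinv
  funext j
  have hpre : R ≤ (g.symm (j, R)).2 := by
    by_contra! hlt
    have := hF hlt
    simp [F] at this
  obtain ⟨hray, hpos⟩ := htrans hpre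
  rw [g.apply_symm_apply] at hray hpos
  rw [← hray] at hpos
  have hnonneg := hm j
  simp only [Pi.zero_apply] at hpos hnonneg ⊢
  omega

section Generators

variable {h0 : 0 < n} {i j : Fin n}

theorem gGen_apply_ray0_zero (hi : i ≠ ray0 n h0) : gGen n h0 i hi (ray0 n h0, 0) = (i, 0) := by
  simp [gGen, gFun]

theorem gGen_apply_ray0_succ (hi : i ≠ ray0 n h0) (p : ℕ) :
    gGen n h0 i hi (ray0 n h0, p + 1) = (ray0 n h0, p) := by
  simp [gGen, gFun]

theorem gGen_apply_self (hi : i ≠ ray0 n h0) (p : ℕ) : gGen n h0 i hi (i, p) = (i, p + 1) := by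
  simp [gGen, gFun, hi]

theorem gGen_apply_of_ne (hi : i ≠ ray0 n h0) (hj : j ≠ ray0 n h0) (hji : j ≠ i) (p : ℕ) :
    gGen n h0 i hi (j, p) = (j, p) := by
  simp [gGen, gFun, hj, hji]

theorem swap_mul_gGen_mul_gGen (hi : i ≠ ray0 n h0) (hj : j ≠ ray0 n h0) (hij : i ≠ j) :
    swap (i, 0) (j, 0) * gGen n h0 j hj * gGen n h0 i hi =
      gGen n h0 i hi * gGen n h0 j hj := by
  ext1 ⟨k, p⟩
  simp only [Perm.mul_apply]
  by_cases hk : k = ray0 n h0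
  · subst hk
    rcases p with - | - | p <;>
      simp [gGen_apply_ray0_zero, gGen_apply_ray0_succ, gGen_apply_of_ne, swap_apply_def,
        hi, hj, hi.symm, hj.symm, hij, hij.symm]
  by_cases hki : k = i
  · subst hki
    simp [gGen_apply_self, gGen_apply_of_ne, swap_apply_def, hi, hij]
  by_cases hkj : k = j
  · subst hkj
    simp [gGen_apply_self, gGen_apply_of_ne, swap_apply_def, hj, hki]
  · simp [gGen_apply_of_ne, swap_apply_def, hk, hki, hkj]

theorem swap_ray0_mem (hgen : ∀ i hi, gGen n h0 i hi ∈ C) (hn : 3 ≤ n)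
    (hj : j ≠ ray0 n h0) (p q : ℕ) :
    swap (ray0 n h0, p) (j, q) ∈ C := by
  induction q generalizing p with
  | zero =>
    obtain ⟨i, hi, hij⟩ := Cardinal.exists_ne_ne_of_three_le
      (by simpa using mod_cast hn : 3 ≤ Cardinal.mk (Fin n)) (ray0 n h0) j
    induction p with
    | zero =>
      rw [← swap_apply_apply_mem_iff (hgen i hi), gGen_apply_ray0_zero,
        gGen_apply_of_ne hi hj hij.symm, ← C.mul_mem_cancel_right (hgen j hj),
        ← C.mul_mem_cancel_right (hgen i hi), swap_mul_gGen_mul_gGen hi hj hij]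
      exact C.mul_mem (hgen i hi) (hgen j hj)
    | succ p ih =>
      rwa [← swap_apply_apply_mem_iff (hgen i hi), gGen_apply_ray0_succ,
        gGen_apply_of_ne hi hj hij.symm]
  | succ q ih =>
    rw [← gGen_apply_ray0_succ hj, ← gGen_apply_self hj, swap_apply_apply_mem_iff (hgen j hj)]
    exact ih (p + 1)

theorem containsSwaps_of_gGen_mem (hgen : ∀ i hi, gGen n h0 i hi ∈ C) (hn : 3 ≤ n) :
    ContainsSwaps C := by
  have hbase (x : XH n) : swap (ray0 n h0, 0) x ∈ C := by
    obtain ⟨j, p⟩ := x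
    by_cases hj : j = ray0 n h0
    · have : Nontrivial (Fin n) := Fin.nontrivial_iff_two_le.mpr (by omega)
      obtain ⟨i, hi⟩ := exists_ne (ray0 n h0)
      refine SubmonoidClass.swap_mem_trans C (swap_ray0_mem hgen hn hi 0 0) ?_
      rw [hj, swap_comm]
      exact swap_ray0_mem hgen hn hi p 0
    · exact swap_ray0_mem hgen hn hj 0 p
  exact fun x y => SubmonoidClass.swap_mem_trans C (swap_comm x _ ▸ hbase x) (hbase y)

end Generators

/-- The group of translation vectors of the elements of `C`. -/
def translationVectors (C : Subgroup (Perm (XH n))) : AddSubgroup (Fin n → ℤ) where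
  carrier := {m | ∃ g ∈ C, HasTranslationVector g m}
  zero_mem' := ⟨1, C.one_mem, hasTranslationVector_iff.mpr .one⟩
  add_mem' := fun ⟨g, hg, hgm⟩ ⟨h, hh, hhm⟩ => ⟨g * h, C.mul_mem hg hh, hgm.mul hhm⟩
  neg_mem' := fun ⟨g, hg, hgm⟩ => ⟨g⁻¹, C.inv_mem hg, hgm.inv⟩

theorem sum_zsmul_gVec_apply {h0 : 0 < n} (m : Fin n → ℤ) {j : Fin n} (hj : j ≠ ray0 n h0) :
    (∑ i ∈ Finset.univ.erase (ray0 n h0), m i • gVec n h0 i) j = m j := by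
  simp [gVec, hj, Finset.sum_apply]

theorem sum_zsmul_gVec_mem {h0 : 0 < n} (hgen : ∀ i hi, gGen n h0 i hi ∈ C) (m : Fin n → ℤ) :
    ∑ i ∈ Finset.univ.erase (ray0 n h0), m i • gVec n h0 i ∈ translationVectors C :=
  sum_mem fun i hi => zsmul_mem
    (show gVec n h0 i ∈ translationVectors C from
      ⟨_, hgen i (Finset.ne_of_mem_erase hi), hasTranslationVector_gGen h0 i _⟩) _

/-- After subtracting a combination of the generators' vectors, only the coordinate on the first ray
is left, so the vector or its negative is nonnegative. -/
theorem translationVectors_houghton_le {h0 : 0 < n} (hgen : ∀ i hi, gGen n h0 i hi ∈ C) :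
    translationVectors (Houghton n) ≤ translationVectors C := by
  intro m hm
  set s := ∑ i ∈ Finset.univ.erase (ray0 n h0), m i • gVec n h0 i with hs
  have hdiff : m - s ∈ translationVectors (Houghton n) :=
    sub_mem hm (sum_zsmul_gVec_mem (fun i hi => gGen_mem n h0 i hi) m)
  have hzero (j : Fin n) (hj : j ≠ ray0 n h0) : (m - s) j = 0 := by
    rw [Pi.sub_apply, hs, sum_zsmul_gVec_apply m hj, sub_self]
  have hsign : 0 ≤ m - s ∨ 0 ≤ -(m - s) :=
    (le_total 0 ((m - s) (ray0 n h0))).imp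
      (fun h j => by
        obtain rfl | hj := eq_or_ne j (ray0 n h0)
        exacts [h, (hzero j hj).ge])
      (fun h j => by
        obtain rfl | hj := eq_or_ne j (ray0 n h0)
        exacts [neg_nonneg.mpr h, (neg_eq_zero.mpr (hzero j hj)).ge])
  have hms : m = s := by
    obtain ⟨g, -, hg⟩ := hdiff
    obtain hpos | hneg := hsign
    · exact sub_eq_zero.mp (hg.eq_zero_of_nonneg hpos)
    · exact sub_eq_zero.mp (neg_eq_zero.mp (hg.inv.eq_zero_of_nonneg hneg))
  exact hms ▸ sum_zsmul_gVec_mem hgen m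

theorem houghton_le_of_gGen_mem {h0 : 0 < n} (hn : 3 ≤ n) (hgen : ∀ i hi, gGen n h0 i hi ∈ C) :
    Houghton n ≤ C := by
  rintro g ⟨m, hm⟩
  obtain ⟨h, hhC, hhm⟩ := translationVectors_houghton_le hgen ⟨g, ⟨m, hm⟩, hm⟩
  have hzero := hhm.inv.mul hm
  rw [neg_add_cancel, hasTranslationVector_iff] at hzero
  rw [← C.mul_mem_cancel_left (C.inv_mem hhC)]
  refine (containsSwaps_of_gGen_mem hgen hn).mem_of_finite
    ((eventually_cofinite.mp hzero).subset fun x hx hx' => hx ?_)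
  refine Prod.ext hx'.1 ?_
  simpa using hx'.2

theorem closure_houghtonGensOnly (hn : 3 ≤ n) (h0 : 0 < n) :
    Subgroup.closure (houghtonGensOnly n h0) = ⊤ := by
  have hle : Houghton n ≤ (Subgroup.closure (houghtonGensOnly n h0)).map (Houghton n).subtype :=
    houghton_le_of_gGen_mem hn fun i hi =>
      have hmem : hGen n h0 i hi ∈ Subgroup.closure (houghtonGensOnly n h0) :=
        Subgroup.subset_closure ⟨i, hi, rfl⟩
      Subgroup.mem_map_of_mem (Houghton n).subtype hmem
  exact eq_top_iff.mpr fun g _ =>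
    (Subgroup.mem_map_iff_mem (Houghton n).subtype_injective).mp (hle g.2)

end Generation

theorem growthRate_automorphism_eq_one_general {n : ℕ} (hn : 2 ≤ n) {S : Set (Houghton n)}
    (hS : Subgroup.closure S = ⊤) (φ : Houghton n ≃* Houghton n) :
    growthRate S φ.toMonoidHom = 1 := by
  have : Nonempty (Fin n) := ⟨⟨0, by omega⟩⟩
  have hswap : ContainsSwaps (Houghton n) := fun x y => swap_mem_houghton x y
  have : Nontrivial (Houghton n) := hswap.nontrivial
  obtain ⟨σ, hσ⟩ := hswap.exists_equiv_map_eq_permCongr hswap φ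
  have hconj (g : Houghton n) : (φ g : Equiv.Perm (XH n)) = σ * g * σ⁻¹ :=
    (hσ g).trans (σ.permCongr_eq_mul g)
  obtain ⟨N, hN, hmem⟩ :=
    exists_pow_mem_houghton_of_mem_normalizer hn (mem_normalizer_of_forall_coe_map_eq_conj hconj)
  exact growthRate_eq_one_of_iterate_eq_conj hS hN
    (iterate_eq_conj_of_forall_coe_map_eq_conj hconj hmem)

/-- For every `n ≥ 3` and every automorphism `φ` of Houghton's
group `H_n`, the growth rate `GR(φ)` equals `1`. -/
theorem growthRate_automorphism_eq_one
    (n : ℕ) (hn : 3 ≤ n) (h0 : 0 < n)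
    (φ : Houghton n ≃* Houghton n) :
    growthRate (houghtonGensOnly n h0) φ.toMonoidHom = 1 :=
  growthRate_automorphism_eq_one_general (by omega) (closure_houghtonGensOnly hn h0) φ
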